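/- Let 𝔤 be a finite-dimensional complex semisimple Lie algebra and (e,h,f) an sl2-triple in 𝔤 with e a distinguished nilpotent element. Then every eigenvalue of the restriction of ad h to the centralizer 𝔤^e is a nonnegative even integer, and 2 is an eigenvalue (with eigenvector e); moreover 2 is the smallest eigenvalue of the restriction of ad h to 𝔤^e. -/

import Mathlib

open scoped ComplexOrder

/-- The centralizer `𝔤^e = {x ∈ 𝔤 : ⁅x, e⁆ = 0}` of an element `e`, as a Lie subalgebra. -/
def centralizer (L : Type*) [LieRing L] [LieAlgebra ℂ L] (e : L) : LieSubalgebra ℂ L where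
  carrier := {x : L | ⁅x, e⁆ = 0}
  add_mem' := fun {a b} ha hb => by
    simp only [Set.mem_setOf_eq] at *
    rw [add_lie, ha, hb, add_zero]
  zero_mem' := by simp
  smul_mem' := fun c a ha => by
    simp only [Set.mem_setOf_eq] at *
    rw [smul_lie, ha, smul_zero]
  lie_mem' := fun {a b} ha hb => by
    simp only [Set.mem_setOf_eq] at *
    simp [lie_lie, ha, hb]

/-- Membership in the centre `𝔷(𝔤^e)` of the centralizer of `e`:
`v` centralizes `e` and commutes with every element of `𝔤^e`. -/
def InCenterOfCentralizer (L : Type*) [LieRing L] [LieAlgebra ℂ L] (e v : L) : Prop :=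
  ⁅v, e⁆ = 0 ∧ ∀ y : L, ⁅y, e⁆ = 0 → ⁅v, y⁆ = 0

/-- The centre `𝔷(𝔤^e)` of the centralizer of `e`, as a subspace of `L`. -/
def zCenter (L : Type*) [LieRing L] [LieAlgebra ℂ L] (e : L) : Submodule ℂ L where
  carrier := {v : L | ⁅v, e⁆ = 0 ∧ ∀ y : L, ⁅y, e⁆ = 0 → ⁅v, y⁆ = 0}
  add_mem' := fun {a b} ha hb => ⟨by rw [add_lie, ha.1, hb.1, add_zero],
    fun y hy => by rw [add_lie, ha.2 y hy, hb.2 y hy, add_zero]⟩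
  zero_mem' := ⟨zero_lie e, fun y _ => zero_lie y⟩
  smul_mem' := fun c a ha => ⟨by rw [smul_lie, ha.1, smul_zero],
    fun y hy => by rw [smul_lie, ha.2 y hy, smul_zero]⟩

/-- Property (P) for an `sl₂`-triple `(e, h, f)`: for every nonzero `v ∈ 𝔷(𝔤^e)`, the
eigenspace `𝔷_max` of the restriction of `ad h` to `𝔷(𝔤^e)` for its largest eigenvalue is
contained in `[[f, 𝔤^e], v] = {⁅⁅f, x⁆, v⁆ : x ∈ 𝔤^e}`. -/
def PropertyP (L : Type*) [LieRing L] [LieAlgebra ℂ L] (e h f : L) : Prop :=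
  ∀ m : ℂ,
    (∃ z : L, z ≠ 0 ∧ InCenterOfCentralizer L e z ∧ ⁅h, z⁆ = m • z) →
    (∀ m' : ℂ, (∃ z : L, z ≠ 0 ∧ InCenterOfCentralizer L e z ∧ ⁅h, z⁆ = m' • z) → m' ≤ m) →
    ∀ v : L, InCenterOfCentralizer L e v → v ≠ 0 →
      ∀ z : L, InCenterOfCentralizer L e z → ⁅h, z⁆ = m • z →
        ∃ x : L, ⁅x, e⁆ = 0 ∧ ⁅⁅f, x⁆, v⁆ = z

/-- The stabilizer `{x ∈ 𝔮 : ξ(⁅x, y⁆) = 0 for all y ∈ 𝔮}` of a linear functional `ξ`. -/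
def coadStab (Q : Type*) [LieRing Q] [LieAlgebra ℂ Q] (ξ : Module.Dual ℂ Q) : Submodule ℂ Q where
  carrier := {x : Q | ∀ y : Q, ξ ⁅x, y⁆ = 0}
  add_mem' := fun {a b} ha hb y => by rw [add_lie, map_add, ha y, hb y, add_zero]
  zero_mem' := fun y => by rw [zero_lie, map_zero]
  smul_mem' := fun c a ha y => by rw [smul_lie, map_smul, ha y, smul_zero]

/-- The index of a complex Lie algebra:
`ind 𝔮 = min_{ξ ∈ 𝔮*} dim {x ∈ 𝔮 : ξ(⁅x, y⁆) = 0 for all y ∈ 𝔮}`. -/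
noncomputable def lieIndex (Q : Type*) [LieRing Q] [LieAlgebra ℂ Q] : ℕ :=
  ⨅ ξ : Module.Dual ℂ Q, Module.finrank ℂ ↥(coadStab Q ξ)

/-- A nilpotent element `e` is distinguished if the only `x ∈ 𝔤^e` such that `ad x` is a
semisimple endomorphism of `𝔤` is `x = 0`. -/
def IsDistinguished (L : Type*) [LieRing L] [LieAlgebra ℂ L] (e : L) : Prop :=
  ∀ x : L, ⁅x, e⁆ = 0 → (LieAlgebra.ad ℂ L x).IsSemisimple → x = 0

/-!
Grade `𝔤` by the eigenvalues of `ad h`. Elements of `𝔤^e` are ad-nilpotent, because their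
semisimple parts lie in `𝔤^e`. By polarization `𝔤^e` is isotropic for the Killing form, hence
contained in `[e, 𝔤]`, on which a highest weight vector has positive weight. So `𝔤^e` has no
nonzero vector of weight `0`, and `ad e : 𝔤₀ → 𝔤₂` is injective.

Richardson's theorem yields `x ∈ 𝔤_{≥1}` with `[x, 𝔤_{≥0}] ⊇ 𝔤_{≥1}`. Comparing the ranks of `ad x`
and `ad e` from `𝔤_{≥0}` to `𝔤` modulo `𝔤_{≥3}` forces `x ∈ 𝔤_{≥2}`, and then `[x, 𝔤_{≥0}]` has no
component of weight `1`: there are no vectors of weight `1` at all. A highest weight vector `z` of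
odd weight `2k + 1` is impossible, since `f^k z` would have weight `1`.

For Richardson's theorem, take `x ∈ 𝔤_{≥1}` at which the ranks of certain linear systems depending
on `x` are maximal, and complete it to a triple `(x, d, y)`. The filtration of `𝔤` by the weights of
`ad d` depends only on `x`, being its monodromy weight filtration, and maximality of the ranks
controls its first-order variation. By duality for the Killing form, the theorem says that
`[a, x] ∈ 𝔤_{≥1}` implies `a ∈ 𝔤_{≥0}`. Killing orthogonality also gives `σ ∈ 𝔤_{≥0}` differing
from `d` by positive weights of `ad d`; it is invertible on the vectors of positive weight for both
gradings, which gives the implication up to a summand of nonnegative weight for `ad d`, and that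
summand is corrected by an element of the centralizer of `x`, which lies in `𝔤_{≥0}`.
-/

open Module Module.End LieAlgebra LieModule

section GenericRank

variable {K V W : Type*} [Field K] [Infinite K] [AddCommGroup V] [Module K V] [AddCommGroup W]
  [Module K W]

lemma exists_ne_zero_injective_add_smul [FiniteDimensional K V] {f : V →ₗ[K] W}
    (hf : Function.Injective f) (g : V →ₗ[K] W) :
    ∃ t : K, t ≠ 0 ∧ Function.Injective (f + t • g) := by
  obtain ⟨φ, hφ⟩ := f.exists_leftInverse_of_injective (LinearMap.ker_eq_bot.2 hf)
  obtain ⟨t, ht⟩ :=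
    (((finite_hasEigenvalue (φ ∘ₗ g)).image fun μ ↦ -μ⁻¹).insert 0).exists_notMem
  obtain ⟨ht0, ht⟩ := not_or.1 (Set.mem_insert_iff.not.1 ht)
  refine ⟨t, ht0, (injective_iff_map_eq_zero _).2 fun v hv ↦ by_contra fun hv0 ↦ ht ?_⟩
  have hφv : v + t • φ (g v) = 0 := by
    simpa [show φ (f v) = v from LinearMap.congr_fun hφ v] using congr_arg φ hv
  refine ⟨-t⁻¹, hasEigenvalue_of_hasEigenvector (x := v) ⟨mem_eigenspace_iff.2 ?_, hv0⟩, by simp⟩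
  rw [LinearMap.comp_apply, neg_smul, eq_neg_iff_add_eq_zero, add_comm, ← inv_smul_smul₀ ht0 (φ _),
    ← smul_add, hφv, smul_zero]

lemma mem_range_of_finrank_range_add_smul_le [FiniteDimensional K W] {f g : V →ₗ[K] W}
    (h : ∀ t : K, finrank K (LinearMap.range (f + t • g)) ≤ finrank K (LinearMap.range f))
    {c : V} (hc : f c = 0) : g c ∈ LinearMap.range f := by
  by_contra hgc
  obtain ⟨U, hU⟩ := (LinearMap.ker f).exists_isCompl
  let equiv := f.kerComplementEquivRange hU.symm
  have : FiniteDimensional K U := equiv.symm.finiteDimensional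
  let F : U × K →ₗ[K] W := (f.domRestrict U).coprod (LinearMap.toSpanSingleton K W (g c))
  have hF : Function.Injective F := by
    refine (injective_iff_map_eq_zero _).2 fun ⟨u, s⟩ hus ↦ ?_
    replace hus : f u + s • g c = 0 := hus
    have hs : s = 0 := by_contra fun hs ↦ hgc ⟨-s⁻¹ • u, by
      rw [map_smul, eq_neg_of_add_eq_zero_left hus, neg_smul_neg, inv_smul_smul₀ hs]⟩
    have hu : (u : V) = 0 :=
      Submodule.disjoint_def.1 hU.disjoint u (by simpa [hs] using hus) u.2
    exact Prod.ext (Subtype.ext hu) hs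
  obtain ⟨t, ht, hinj⟩ := exists_ne_zero_injective_add_smul hF (g.domRestrict U ∘ₗ .fst K U K)
  have hle : LinearMap.range (F + t • (g.domRestrict U ∘ₗ .fst K U K)) ≤
      LinearMap.range (f + t • g) := by
    rintro _ ⟨⟨u, s⟩, rfl⟩
    refine ⟨u + (s * t⁻¹) • c, ?_⟩
    have : t • (s * t⁻¹) • g c = s • g c := by rw [smul_smul, mul_comm s, mul_inv_cancel_left₀ ht]
    simp [F, hc, this, add_right_comm, add_assoc]
  have hdim := (LinearMap.finrank_range_of_inj hinj).symm.trans_le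
    ((Submodule.finrank_mono hle).trans (h t))
  rw [finrank_prod, equiv.finrank_eq, finrank_self] at hdim
  omega

/-- Lower semicontinuity of the rank, in its infinitesimal form. -/
lemma exists_forall_mem_range_of_apply_eq_zero {E : Type*} [AddCommGroup E] [Module K E]
    [FiniteDimensional K W] (A : V →ₗ[K] W) (B : E →ₗ[K] V →ₗ[K] W) (U : Submodule K E) :
    ∃ x ∈ U, ∀ v ∈ U, ∀ c, (A + B x) c = 0 → B v c ∈ LinearMap.range (A + B x) := by
  let S : Set ℕ := (fun x ↦ finrank K (LinearMap.range (A + B x))) '' U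
  have hS : BddAbove S := ⟨finrank K W, by rintro _ ⟨x, -, rfl⟩; exact Submodule.finrank_le _⟩
  obtain ⟨x, hx, hmax⟩ := Nat.sSup_mem (Set.Nonempty.image _ ⟨0, U.zero_mem⟩) hS
  refine ⟨x, hx, fun v hv c hc ↦ mem_range_of_finrank_range_add_smul_le (fun t ↦ ?_) hc⟩
  rw [add_assoc, ← map_smul, ← map_add]
  exact (le_csSup hS ⟨_, U.add_mem hx (U.smul_mem t hv), rfl⟩).trans_eq hmax.symm

end GenericRank

section Sl2Weights

lemma pow_succ_mul_eq_of_lie_eq {R : Type*} [Ring R] {N Y H : R} (hH : N * Y - Y * N = H)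
    (hN : H * N - N * H = 2 * N) (k : ℕ) :
    N ^ (k + 1) * Y = Y * N ^ (k + 1) + (k + 1 : ℕ) * ((H - k) * N ^ k) := by
  have hNY : N * Y = Y * N + H := by rw [← hH]; abel
  have hNH : N * H = H * N - 2 * N := by rw [← hN]; abel
  induction k with
  | zero => simp [hNY]
  | succ k ih =>
    have hNk (m : ℕ) : N * m = m * N := (Nat.cast_commute m N).symm
    calc N ^ (k + 1 + 1) * Y
        = N * Y * N ^ (k + 1) + (k + 1 : ℕ) * ((N * H - k * N) * N ^ k) := by
          rw [pow_succ', mul_assoc, ih, mul_add, ← mul_assoc N ((k + 1 : ℕ) : R), hNk, ← hNk k]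
          noncomm_ring
      _ = (Y * N + H) * N ^ (k + 1) + (k + 1 : ℕ) * ((H - 2 - k) * N ^ (k + 1)) := by
          rw [hNY, hNH, pow_succ' N k]
          noncomm_ring
      _ = Y * N ^ (k + 1 + 1) + (k + 1 + 1 : ℕ) * ((H - (k + 1 : ℕ)) * N ^ (k + 1)) := by
          rw [pow_succ' N (k + 1)]
          generalize N ^ (k + 1) = M
          push_cast
          noncomm_ring

variable {K V : Type*} [Field K] [AddCommGroup V] [Module K V] {N Y H : End K V}

lemma iSup_inf_eigenspace_le_map_sub_smul {ι : Type*} (P : Submodule K V) {c : ι → K} {μ : K}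
    (hμ : ∀ i, c i ≠ μ) :
    ⨆ i, P ⊓ H.eigenspace (c i) ≤ (⨆ i, P ⊓ H.eigenspace (c i)).map (H - μ • 1) := by
  refine iSup_le fun i v hv ↦
    ⟨(c i - μ)⁻¹ • v, Submodule.smul_mem _ _ (Submodule.mem_iSup_of_mem i hv), ?_⟩
  have hHv : H v = c i • v := mem_eigenspace_iff.1 hv.2
  simp [hHv, ← sub_smul, inv_smul_smul₀ (sub_ne_zero.2 (hμ i))]

variable [CharZero K]

lemma sub_smul_mem_ker_inf_range_pow_succ (hH : N * Y - Y * N = H) (hN : H * N - N * H = 2 * N)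
    {k : ℕ} {z : V} (hz : z ∈ LinearMap.ker N ⊓ LinearMap.range (N ^ k)) :
    H z - (k : K) • z ∈ LinearMap.ker N ⊓ LinearMap.range (N ^ (k + 1)) := by
  obtain ⟨hNz, q, rfl⟩ := hz
  replace hNz : N ((N ^ k) q) = 0 := hNz
  refine ⟨?_, ((k + 1 : ℕ) : K)⁻¹ • Y q, ?_⟩
  · have hNH : N (H ((N ^ k) q)) = 0 := by
      simpa [hNz, sub_eq_zero] using LinearMap.congr_fun hN ((N ^ k) q)
    simp [hNH, hNz]
  · have hq : (N ^ (k + 1)) q = 0 := by rwa [pow_succ']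
    have := LinearMap.congr_fun (pow_succ_mul_eq_of_lie_eq hH hN k) q
    rw [Module.End.mul_apply] at this
    rw [map_smul, inv_smul_eq_iff₀ (Nat.cast_ne_zero.2 k.succ_ne_zero), this]
    simp [hq, Nat.cast_smul_eq_nsmul, add_smul]

/-- Each `H - k` raises the depth in the filtration by the `range (N ^ k)`, so `H` has weights at
least `k` on the `k`-th step. -/
lemma ker_inf_range_pow_le_iSup_eigenspace (hH : N * Y - Y * N = H)
    (hN : H * N - N * H = 2 * N) (hnil : IsNilpotent N) (k : ℕ) :
    LinearMap.ker N ⊓ LinearMap.range (N ^ k) ≤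
      ⨆ m : ℕ, LinearMap.ker N ⊓ H.eigenspace ((k + m : ℕ) : K) := by
  obtain ⟨n, hn⟩ := hnil
  induction hd : n - k generalizing k with
  | zero =>
    rw [pow_eq_zero_of_le (by omega) hn, LinearMap.range_zero, inf_bot_eq]
    exact bot_le
  | succ d ih =>
    intro z hz
    obtain ⟨w, hw, hwz⟩ := iSup_inf_eigenspace_le_map_sub_smul (μ := (k : K)) (LinearMap.ker N)
      (fun m ↦ Nat.cast_injective.ne (by omega))
      (ih (k + 1) (by omega) (sub_smul_mem_ker_inf_range_pow_succ hH hN hz))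
    have hwN : w ∈ LinearMap.ker N := (iSup_le fun _ ↦ inf_le_left : iSup _ ≤ LinearMap.ker N) hw
    have hzw : z - w ∈ H.eigenspace ((k + 0 : ℕ) : K) := by
      rw [mem_eigenspace_iff, ← sub_eq_zero, ← sub_eq_zero.2 hwz.symm]
      simp [smul_sub, sub_sub_sub_comm]
    rw [← sub_add_cancel z w]
    refine add_mem (Submodule.mem_iSup_of_mem 0 ⟨sub_mem hz.1 hwN, hzw⟩) ?_
    have hmono : ⨆ m : ℕ, LinearMap.ker N ⊓ H.eigenspace ((k + 1 + m : ℕ) : K) ≤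
        ⨆ m : ℕ, LinearMap.ker N ⊓ H.eigenspace ((k + m : ℕ) : K) :=
      iSup_mono' fun m ↦ ⟨m + 1, by rw [add_right_comm, add_assoc]⟩
    exact hmono hw

lemma exists_nat_of_mem_ker_inf_range_pow (hH : N * Y - Y * N = H) (hN : H * N - N * H = 2 * N)
    (hnil : IsNilpotent N) {k : ℕ} {μ : K} {z : V}
    (hz : z ∈ LinearMap.ker N ⊓ LinearMap.range (N ^ k)) (hμ : H z = μ • z) (h0 : z ≠ 0) :
    ∃ m : ℕ, k ≤ m ∧ μ = m := by
  by_contra! hne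
  have hle : ⨆ m : ℕ, LinearMap.ker N ⊓ H.eigenspace ((k + m : ℕ) : K) ≤
      ⨆ ν, ⨆ _ : ν ≠ μ, H.eigenspace ν :=
    iSup_le fun m ↦ inf_le_right.trans
      (le_iSup₂_of_le _ (hne _ (Nat.le_add_right k m)).symm le_rfl)
  exact h0 (Submodule.disjoint_def.1 (H.eigenspaces_iSupIndep μ) z (mem_eigenspace_iff.2 hμ)
    (hle (ker_inf_range_pow_le_iSup_eigenspace hH hN hnil k hz)))

end Sl2Weights

section TraceOfNilpotent

lemma pow_succ_mul_eq_of_commute {R : Type*} [Ring R] {N C Z : R} (hZ : N * C - C * N = Z)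
    (hNZ : Commute N Z) (k : ℕ) : N ^ (k + 1) * C = C * N ^ (k + 1) + (k + 1) • (Z * N ^ k) := by
  have hNC : N * C = C * N + Z := by rw [← hZ]; abel
  induction k with
  | zero => simp [hNC]
  | succ k ih =>
    rw [pow_succ' N (k + 1), mul_assoc, ih, mul_add, ← mul_assoc, hNC, mul_smul_comm, ← mul_assoc N,
      hNZ.eq, mul_assoc Z, ← pow_succ' N k, add_mul, mul_assoc C, add_assoc, ← succ_nsmul']

variable {K V : Type*} [Field K] [AddCommGroup V] [Module K V] {N C Z : End K V}

lemma pow_succ_apply_eq_smul (hZ : N * C - C * N = Z) (hNZ : Commute N Z) {k : ℕ} {v : V}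
    (hv : (N ^ (k + 1)) v = 0) : (N ^ (k + 1)) (C v) = ((k + 1 : ℕ) : K) • Z ((N ^ k) v) := by
  have := LinearMap.congr_fun (pow_succ_mul_eq_of_commute hZ hNZ k) v
  rw [Nat.cast_smul_eq_nsmul]
  simpa only [Module.End.mul_apply, LinearMap.add_apply, LinearMap.smul_apply, hv, map_zero,
    zero_add] using this

variable [CharZero K]

lemma eq_zero_of_mem_ker_of_apply_eq_smul (hZ : N * C - C * N = Z) (hNZ : Commute N Z)
    (hN : IsNilpotent N) {μ : K} (hμ : μ ≠ 0) {w : V} (hNw : N w = 0) (hw : Z w = μ • w) :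
    w = 0 := by
  have hrange (k : ℕ) : w ∈ LinearMap.range (N ^ k) := by
    induction k with
    | zero => exact ⟨w, rfl⟩
    | succ k ih =>
      obtain ⟨q, rfl⟩ := ih
      refine ⟨(((k + 1 : ℕ) : K) * μ)⁻¹ • C q, ?_⟩
      rw [map_smul, pow_succ_apply_eq_smul hZ hNZ (by rwa [pow_succ']), hw, ← mul_smul _ μ,
        inv_smul_smul₀ (mul_ne_zero (Nat.cast_ne_zero.2 k.succ_ne_zero) hμ)]
  obtain ⟨n, hn⟩ := hN
  simpa [hn, eq_comm] using hrange n

lemma eq_zero_of_hasEigenvalue_mul (hZ : N * C - C * N = Z) (hNZ : Commute N Z)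
    (hN : IsNilpotent N) {μ : K} (hμ : (N * C).HasEigenvalue μ) : μ = 0 := by
  obtain ⟨v, hv⟩ := hμ.exists_hasEigenvector
  obtain ⟨j, hj, hNj⟩ := Nat.exists_not_and_succ_of_not_zero_of_exists (p := fun k ↦ (N ^ k) v = 0)
    (by simpa using hv.2) (hN.imp fun n hn ↦ by rw [hn, LinearMap.zero_apply])
  have hj0 : ((j + 1 : ℕ) : K) ≠ 0 := Nat.cast_ne_zero.2 j.succ_ne_zero
  have hZw : Z ((N ^ j) v) = (((j + 1 : ℕ) : K)⁻¹ * μ) • (N ^ j) v := by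
    rw [mul_smul, eq_inv_smul_iff₀ hj0, ← pow_succ_apply_eq_smul hZ hNZ hNj, pow_succ,
      Module.End.mul_apply, ← Module.End.mul_apply N C, hv.apply_eq_smul, map_smul]
  by_contra hμ0
  exact hj (eq_zero_of_mem_ker_of_apply_eq_smul hZ hNZ hN
    (mul_ne_zero (inv_ne_zero hj0) hμ0) (by rwa [pow_succ'] at hNj) hZw)

lemma trace_mul_eq_zero_of_commute [IsAlgClosed K] [FiniteDimensional K V]
    (hZ : N * C - C * N = Z) (hNZ : Commute N Z) (hN : IsNilpotent N) :
    LinearMap.trace K V (N * C) = 0 := by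
  rw [Module.End.trace_eq_sum_roots_charpoly_of_splits (IsAlgClosed.splits _)]
  exact Multiset.sum_eq_zero fun μ hμ ↦ eq_zero_of_hasEigenvalue_mul hZ hNZ hN
    ((hasEigenvalue_iff_isRoot_charpoly _ _).2 (Polynomial.isRoot_of_mem_roots hμ))

end TraceOfNilpotent

section AdjointRepresentation

variable {K L : Type*} [Field K] [LieRing L] [LieAlgebra K L]

section Representation

variable {M : Type*} [AddCommGroup M] [Module K M] [LieRingModule L M] [LieModule K L M]

lemma toEnd_mul_sub_toEnd_mul (x y : L) :
    toEnd K L M x * toEnd K L M y - toEnd K L M y * toEnd K L M x = toEnd K L M ⁅x, y⁆ := by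
  ext m
  simp [Module.End.mul_apply]

lemma toEnd_mul_sub_toEnd_mul_of_lie_eq_two_smul {h x : L} (hx : ⁅h, x⁆ = (2 : K) • x) :
    toEnd K L M h * toEnd K L M x - toEnd K L M x * toEnd K L M h = 2 * toEnd K L M x := by
  rw [toEnd_mul_sub_toEnd_mul, hx, map_smul, two_smul, two_mul]

end Representation

lemma commute_ad_of_lie_eq_zero {x y : L} (h : ⁅x, y⁆ = 0) : Commute (ad K L x) (ad K L y) := by
  rw [Commute, SemiconjBy, ← sub_eq_zero, ad, toEnd_mul_sub_toEnd_mul, h, map_zero]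

lemma killingForm_comm (x y : L) : killingForm K L x y = killingForm K L y x :=
  LieModule.traceForm_comm K L L x y

lemma killingForm_lie_apply (x y z : L) : killingForm K L ⁅x, y⁆ z = killingForm K L x ⁅y, z⁆ :=
  LieModule.traceForm_apply_lie_apply K L L x y z

lemma killingForm_eq_zero_of_isNilpotent_mul {x y : L}
    (h : IsNilpotent (ad K L x * ad K L y)) : killingForm K L x y = 0 := by
  rw [killingForm_apply_apply]
  exact (LinearMap.isNilpotent_trace_of_isNilpotent h).eq_zero

lemma killingForm_eq_zero_of_lie_eq_zero {x y : L} (h : ⁅x, y⁆ = 0)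
    (hx : IsNilpotent (ad K L x)) : killingForm K L x y = 0 :=
  killingForm_eq_zero_of_isNilpotent_mul ((commute_ad_of_lie_eq_zero h).isNilpotent_mul_right hx)

lemma killingForm_eq_zero_of_lie_lie_eq_zero [CharZero K] [IsAlgClosed K] [FiniteDimensional K L]
    {x c : L} (hx : IsNilpotent (ad K L x)) (hc : ⁅x, ⁅x, c⁆⁆ = 0) : killingForm K L x c = 0 :=
  trace_mul_eq_zero_of_commute (toEnd_mul_sub_toEnd_mul x c) (commute_ad_of_lie_eq_zero hc) hx

variable [IsKilling K L]

lemma eq_zero_of_killingForm_eq_zero {x : L} (h : ∀ y, killingForm K L x y = 0) : x = 0 :=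
  (IsKilling.killingForm_nondegenerate K L).1 x h

lemma mem_of_killingForm_eq_zero [FiniteDimensional K L] (W : Submodule K L) {v : L}
    (h : ∀ w, (∀ a ∈ W, killingForm K L a w = 0) → killingForm K L v w = 0) : v ∈ W := by
  have hrefl : (killingForm K L).IsRefl := fun x y hxy ↦ by rw [killingForm_comm, hxy]
  rw [← LinearMap.BilinForm.orthogonal_orthogonal
    (IsKilling.killingForm_nondegenerate K L) hrefl W, LinearMap.BilinForm.mem_orthogonal_iff]
  exact fun w hw ↦ hrefl _ _ (h w hw)

end AdjointRepresentation

section JacobsonMorozov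

variable {K L : Type*} [Field K] [CharZero K] [IsAlgClosed K] [LieRing L] [LieAlgebra K L]
  [FiniteDimensional K L] [IsKilling K L]

lemma exists_lie_lie_eq_two_smul {x : L} (hx : IsNilpotent (ad K L x)) :
    ∃ y : L, ⁅⁅x, y⁆, x⁆ = (2 : K) • x := by
  obtain ⟨w, hw⟩ : x ∈ LinearMap.range (ad K L x * ad K L x) := by
    refine mem_of_killingForm_eq_zero _ fun w hw ↦
      killingForm_eq_zero_of_lie_lie_eq_zero hx (eq_zero_of_killingForm_eq_zero (K := K) fun y ↦ ?_)
    rw [killingForm_comm, ← killingForm_lie_apply, ← killingForm_lie_apply, ← lie_skew ⁅y, x⁆ x,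
      ← lie_skew y x, lie_neg, neg_neg]
    exact hw _ ⟨y, rfl⟩
  replace hw : ⁅x, ⁅x, w⁆⁆ = x := hw
  refine ⟨(-2 : K) • w, ?_⟩
  rw [lie_smul, smul_lie, ← lie_skew, hw, smul_neg, neg_smul, neg_neg]

/-- The Jacobson–Morozov theorem. -/
theorem exists_isSl2Triple {x : L} (hx : IsNilpotent (ad K L x)) (hx0 : x ≠ 0) :
    ∃ h y : L, IsSl2Triple h x y := by
  obtain ⟨y, hy⟩ := exists_lie_lie_eq_two_smul hx
  obtain ⟨h, hh⟩ : ∃ h, ⁅x, y⁆ = h := ⟨_, rfl⟩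
  rw [hh] at hy
  have hker := ker_inf_range_pow_le_iSup_eigenspace (hh ▸ toEnd_mul_sub_toEnd_mul x y)
    (toEnd_mul_sub_toEnd_mul_of_lie_eq_two_smul hy) hx 0
  have hz : ⁅x, ⁅h, y⁆ + (2 : K) • y⁆ = 0 := by
    rw [lie_add, lie_smul, leibniz_lie x h, hh, lie_self, add_zero, ← lie_skew x, hy, neg_lie,
      smul_lie, hh, neg_add_cancel]
  obtain ⟨c, hc, hcz⟩ := iSup_inf_eigenspace_le_map_sub_smul (μ := (-2 : K)) _
    (fun m hm ↦ (by norm_cast : ((0 + m + 2 : ℕ) : K) ≠ 0) (by push_cast at hm ⊢; rw [hm]; ring))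
    (hker ⟨hz, _, rfl⟩)
  have hxc : ⁅x, c⁆ = 0 :=
    (iSup_le fun _ ↦ inf_le_left : iSup _ ≤ LinearMap.ker (ad K L x)) hc
  replace hcz : ⁅h, c⁆ + (2 : K) • c = ⁅h, y⁆ + (2 : K) • y := by simpa using hcz
  refine ⟨h, y - c, ⟨fun h0 ↦ hx0 ?_, by rw [lie_sub, hxc, sub_zero, hh], ?_, ?_⟩⟩
  · simpa [h0, eq_comm] using hy
  · rw [hy, ofNat_smul_eq_nsmul]
  · rw [lie_sub, ← ofNat_smul_eq_nsmul K, smul_sub, eq_neg_iff_add_eq_zero,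
      sub_add_sub_comm, hcz, sub_self]

end JacobsonMorozov

section WeightFiltration

variable {K V : Type*} [Field K] [AddCommGroup V] [Module K V]

/-- The decreasing filtration of `V` by the sums of the eigenspaces of `T` for integral eigenvalues
`≥ j`. -/
def weightFiltration (T : End K V) (j : ℤ) : Submodule K V :=
  ⨆ n : ℕ, T.eigenspace ((j + n : ℤ) : K)

variable {T : End K V}

lemma eigenspace_le_weightFiltration {i j : ℤ} (h : j ≤ i) :
    T.eigenspace (i : K) ≤ weightFiltration T j := by
  obtain ⟨n, rfl⟩ := Int.le.dest h
  exact le_iSup (fun n : ℕ ↦ T.eigenspace ((j + n : ℤ) : K)) n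

lemma weightFiltration_antitone : Antitone (weightFiltration T) := fun _ _ h ↦
  iSup_le fun _ ↦ eigenspace_le_weightFiltration (by omega)

lemma eigenspace_sup_weightFiltration (j : ℤ) :
    T.eigenspace (j : K) ⊔ weightFiltration T (j + 1) = weightFiltration T j := by
  have hsucc (n : ℕ) : j + 1 + n = j + (n + 1 : ℕ) := by push_cast; ring
  simp only [weightFiltration, hsucc]
  simpa only [Nat.cast_zero, add_zero] using
    sup_iSup_nat_succ fun n : ℕ ↦ T.eigenspace ((j + n : ℤ) : K)

lemma apply_sub_smul_mem_weightFiltration {j : ℤ} {v : V} (hv : v ∈ weightFiltration T j) :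
    T v - (j : K) • v ∈ weightFiltration T (j + 1) := by
  induction hv using Submodule.iSup_induction' with
  | zero => simp
  | add v w _ _ hv hw => simpa [smul_add, add_sub_add_comm] using add_mem hv hw
  | mem n v hv =>
    rw [mem_eigenspace_iff.1 hv, ← sub_smul]
    cases n with
    | zero => simp
    | succ n =>
      exact Submodule.smul_mem _ _ (eigenspace_le_weightFiltration (by push_cast; omega) hv)

lemma apply_mem_weightFiltration {j : ℤ} {v : V} (hv : v ∈ weightFiltration T j) :
    T v ∈ weightFiltration T j := by
  simpa using add_mem (weightFiltration_antitone (by omega)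
    (apply_sub_smul_mem_weightFiltration hv)) (Submodule.smul_mem _ (j : K) hv)

lemma exists_weightFiltration_eq_bot_and_eq_top [CharZero K] [FiniteDimensional K V]
    (hT : ⨆ i : ℤ, T.eigenspace (i : K) = ⊤) :
    ∃ n : ℕ, weightFiltration T n = ⊥ ∧ weightFiltration T (-n) = ⊤ := by
  obtain ⟨n, hn⟩ : ∃ n : ℕ, ∀ i : ℤ, T.HasEigenvalue i → i.natAbs < n := by
    obtain ⟨n, hn⟩ := ((finite_hasEigenvalue T).preimage Int.cast_injective.injOn |>.image
      Int.natAbs).bddAbove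
    exact ⟨n + 1, fun i hi ↦ Nat.lt_succ_of_le (hn ⟨i, hi, rfl⟩)⟩
  have hbot {i : ℤ} (hi : n ≤ i.natAbs) : T.eigenspace (i : K) = ⊥ :=
    not_not.1 (mt (hn i) hi.not_gt)
  refine ⟨n, iSup_eq_bot.2 fun m ↦ hbot (by omega), top_le_iff.1 (hT.ge.trans (iSup_le fun i ↦ ?_))⟩
  by_cases hi : -n ≤ i
  · exact eigenspace_le_weightFiltration hi
  · exact (hbot (by omega)).trans_le bot_le

lemma isNilpotent_of_forall_apply_mem_weightFiltration [CharZero K] [FiniteDimensional K V]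
    (hT : ⨆ i : ℤ, T.eigenspace (i : K) = ⊤) {S : End K V}
    (hS : ∀ j, ∀ v ∈ weightFiltration T j, S v ∈ weightFiltration T (j + 1)) : IsNilpotent S := by
  obtain ⟨n, hbot, htop⟩ := exists_weightFiltration_eq_bot_and_eq_top hT
  have hpow (m : ℕ) (v : V) : (S ^ m) v ∈ weightFiltration T (-n + m) := by
    induction m with
    | zero => simp [htop]
    | succ m ih => simpa [pow_succ', add_assoc] using hS _ _ ih
  refine ⟨n + n, LinearMap.ext fun v ↦ ?_⟩
  simpa [hbot] using hpow (n + n) v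

lemma isNilpotent_mul_of_forall_apply_mem_weightFiltration [CharZero K] [FiniteDimensional K V]
    (hT : ⨆ i : ℤ, T.eigenspace (i : K) = ⊤) {S : End K V} (hnil : IsNilpotent S)
    (hS : ∀ j, ∀ v ∈ weightFiltration T j, S v ∈ weightFiltration T j) : IsNilpotent (T * S) := by
  have hpow (k : ℕ) {j : ℤ} {v : V} (hv : v ∈ weightFiltration T j) :
      (S ^ k) v ∈ weightFiltration T j ∧
        ((T * S) ^ k) v - (j : K) ^ k • (S ^ k) v ∈ weightFiltration T (j + 1) := by
    induction k with
    | zero => simp [hv]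
    | succ k ih =>
      have hSv := hS _ _ ih.1
      rw [pow_succ' S, pow_succ' (T * S), Module.End.mul_apply, Module.End.mul_apply]
      refine ⟨hSv, ?_⟩
      have h := add_mem (apply_mem_weightFiltration (hS _ _ ih.2))
        (Submodule.smul_mem _ ((j : K) ^ k) (apply_sub_smul_mem_weightFiltration hSv))
      simpa [smul_sub, pow_succ, mul_smul] using h
  obtain ⟨k, hk⟩ := hnil
  exact (isNilpotent_of_forall_apply_mem_weightFiltration hT (S := (T * S) ^ k) fun j v hv ↦ by
    simpa [hk] using (hpow k hv).2).of_pow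

variable [CharZero K]

lemma disjoint_eigenspace_weightFiltration {i j : ℤ} (h : i < j) :
    Disjoint (T.eigenspace (i : K)) (weightFiltration T j) :=
  (T.eigenspaces_iSupIndep i).mono_right <| iSup_le fun n ↦
    have hne : ((j + n : ℤ) : K) ≠ i := Int.cast_injective.ne (by omega)
    le_iSup₂_of_le (f := fun ν (_ : ν ≠ (i : K)) ↦ T.eigenspace ν) _ hne le_rfl

end WeightFiltration

section AdWeightFiltration

variable {K L : Type*} [Field K] [LieRing L] [LieAlgebra K L] {d : L}

lemma lie_mem_eigenspace_ad {μ ν : K} {x y : L} (hx : x ∈ (ad K L d).eigenspace μ)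
    (hy : y ∈ (ad K L d).eigenspace ν) : ⁅x, y⁆ ∈ (ad K L d).eigenspace (μ + ν) := by
  rw [mem_eigenspace_iff, ad_apply] at hx hy ⊢
  rw [leibniz_lie, hx, hy, smul_lie, lie_smul, ← add_smul]

lemma killingForm_eq_zero_of_mem_eigenspace_ad {μ ν : K} (hμν : μ + ν ≠ 0) {x y : L}
    (hx : x ∈ (ad K L d).eigenspace μ) (hy : y ∈ (ad K L d).eigenspace ν) :
    killingForm K L x y = 0 := by
  rw [mem_eigenspace_iff, ad_apply] at hx hy
  have h := killingForm_lie_apply (K := K) x d y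
  rw [← lie_skew, hx, hy, map_neg, map_smul, map_smul, LinearMap.neg_apply,
    LinearMap.smul_apply, neg_eq_iff_add_eq_zero, ← add_smul] at h
  exact (smul_eq_zero.1 h).resolve_left hμν

lemma lie_mem_weightFiltration {i j : ℤ} {x y : L} (hx : x ∈ weightFiltration (ad K L d) i)
    (hy : y ∈ weightFiltration (ad K L d) j) : ⁅x, y⁆ ∈ weightFiltration (ad K L d) (i + j) := by
  induction hx using Submodule.iSup_induction' with
  | zero => rw [zero_lie]; exact zero_mem _
  | add x x' _ _ hx hx' => rw [add_lie]; exact add_mem hx hx'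
  | mem m x hx =>
    induction hy using Submodule.iSup_induction' with
    | zero => rw [lie_zero]; exact zero_mem _
    | add y y' _ _ hy hy' => rw [lie_add]; exact add_mem hy hy'
    | mem n y hy =>
      have h := lie_mem_eigenspace_ad hx hy
      rw [← Int.cast_add] at h
      exact eigenspace_le_weightFiltration (by omega) h

variable [CharZero K]

lemma killingForm_eq_zero_of_mem_weightFiltration {i j : ℤ} (hij : 0 < i + j) {x y : L}
    (hx : x ∈ weightFiltration (ad K L d) i) (hy : y ∈ weightFiltration (ad K L d) j) :
    killingForm K L x y = 0 := by
  induction hx using Submodule.iSup_induction' with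
  | zero => simp
  | add x x' _ _ hx hx' => rw [map_add, LinearMap.add_apply, hx, hx', add_zero]
  | mem m x hx =>
    induction hy using Submodule.iSup_induction' with
    | zero => simp
    | add y y' _ _ hy hy' => rw [map_add, hy, hy', add_zero]
    | mem n y hy =>
      refine killingForm_eq_zero_of_mem_eigenspace_ad ?_ hx hy
      rw [← Int.cast_add]
      exact Int.cast_ne_zero.2 (by omega)

variable [FiniteDimensional K L] (hd : ⨆ i : ℤ, (ad K L d).eigenspace (i : K) = ⊤)
include hd

lemma isNilpotent_ad_of_mem_weightFiltration_one {x : L}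
    (hx : x ∈ weightFiltration (ad K L d) 1) : IsNilpotent (ad K L x) :=
  isNilpotent_of_forall_apply_mem_weightFiltration hd fun j _ hv ↦
    add_comm 1 j ▸ lie_mem_weightFiltration hx hv

lemma killingForm_eq_zero_of_mem_weightFiltration_zero {w : L}
    (hw : w ∈ weightFiltration (ad K L d) 0) (hnil : IsNilpotent (ad K L w)) :
    killingForm K L d w = 0 :=
  killingForm_eq_zero_of_isNilpotent_mul <|
    isNilpotent_mul_of_forall_apply_mem_weightFiltration hd hnil fun j _ hv ↦
      zero_add j ▸ lie_mem_weightFiltration hw hv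

lemma eq_zero_of_lie_eq_zero_of_sub_mem_weightFiltration {σ v : L}
    (hσ : σ - d ∈ weightFiltration (ad K L d) 1) (hv : v ∈ weightFiltration (ad K L d) 1)
    (h : ⁅σ, v⁆ = 0) : v = 0 := by
  have hmem (k : ℕ) : v ∈ weightFiltration (ad K L d) (k + 1) := by
    induction k with
    | zero => simpa using hv
    | succ k ih =>
      have hdv := apply_sub_smul_mem_weightFiltration ih
      have hσv := lie_mem_weightFiltration hσ ih
      rw [sub_lie, h, zero_sub, add_comm] at hσv
      have hsmul : ((k + 1 : ℤ) : K) • v ∈ weightFiltration (ad K L d) (k + 1 + 1) := by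
        simpa using neg_mem (add_mem hdv hσv)
      rw [Nat.cast_succ]
      exact (Submodule.smul_mem_iff _ (Int.cast_ne_zero.2 (by omega))).1 hsmul
  obtain ⟨n, hbot, -⟩ := exists_weightFiltration_eq_bot_and_eq_top hd
  simpa [hbot] using weightFiltration_antitone (by omega : (n : ℤ) ≤ n + 1) (hmem n)

variable [IsKilling K L]

lemma mem_weightFiltration_of_killingForm_eq_zero {i : ℤ} {v : L}
    (hv : ∀ w ∈ weightFiltration (ad K L d) (1 - i), killingForm K L v w = 0) :
    v ∈ weightFiltration (ad K L d) i := by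
  obtain ⟨n, -, htop⟩ := exists_weightFiltration_eq_bot_and_eq_top hd
  have hstep {j : ℤ} (hj : j < i) (hvj : v ∈ weightFiltration (ad K L d) j) :
      v ∈ weightFiltration (ad K L d) (j + 1) := by
    rw [← eigenspace_sup_weightFiltration] at hvj
    obtain ⟨a, ha, b, hb, rfl⟩ := Submodule.mem_sup.1 hvj
    have ha0 : a = 0 := eq_zero_of_killingForm_eq_zero (K := K) fun y ↦ by
      induction hd ▸ Submodule.mem_top (x := y) using Submodule.iSup_induction' with
      | zero => simp
      | add y y' _ _ hy hy' => rw [map_add, hy, hy', add_zero]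
      | mem l y hy =>
        by_cases hl : j + l = 0
        · have hyl := eigenspace_le_weightFiltration le_rfl hy
          have hby := killingForm_eq_zero_of_mem_weightFiltration (by omega) hb hyl
          simpa [hby] using hv y (weightFiltration_antitone (by omega) hyl)
        · exact killingForm_eq_zero_of_mem_eigenspace_ad (by exact_mod_cast hl) ha hy
    rwa [ha0, zero_add]
  have hmem (k : ℕ) (hk : -n + k ≤ i) : v ∈ weightFiltration (ad K L d) (-n + k) := by
    induction k with
    | zero => simp [htop]
    | succ k ih => simpa [add_assoc] using hstep (by omega) (ih (by omega))
  obtain hni | hni := le_total i (-n)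
  · exact weightFiltration_antitone hni (htop ▸ Submodule.mem_top)
  · obtain ⟨k, rfl⟩ := Int.le.dest hni
    exact hmem k le_rfl

end AdWeightFiltration

section Sl2Modules

variable {K L M : Type*} [Field K] [LieRing L] [LieAlgebra K L] [AddCommGroup M] [Module K M]
  [LieRingModule L M] [LieModule K L M]

lemma lie_pow_toEnd_apply {h x : L} {s : K} (hx : ⁅h, x⁆ = s • x) (k : ℕ) (m : M) :
    ⁅h, (toEnd K L M x ^ k) m⁆ = (toEnd K L M x ^ k) ⁅h, m⁆ + (k * s) • (toEnd K L M x ^ k) m := by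
  induction k with
  | zero => simp
  | succ k ih =>
    simp only [pow_succ' _ k, Module.End.mul_apply, toEnd_apply_apply, leibniz_lie h, hx, ih,
      smul_lie, lie_add, lie_smul, Nat.cast_succ, add_mul, one_mul, add_smul]
    abel

lemma lie_pow_toEnd_apply_eq_smul {h x : L} {s μ : K} {m : M} (hx : ⁅h, x⁆ = s • x)
    (hm : ⁅h, m⁆ = μ • m) (k : ℕ) :
    ⁅h, (toEnd K L M x ^ k) m⁆ = (μ + k * s) • (toEnd K L M x ^ k) m := by
  rw [lie_pow_toEnd_apply hx, hm, map_smul, add_smul]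

variable [CharZero K] {h e f : L}

lemma exists_pow_toEnd_pow_toEnd_eq_smul {ht : IsSl2Triple h e f} {u : M} {n : ℕ}
    (P : ht.HasPrimitiveVectorWith u (n : K)) {j : ℕ} (hj : j ≤ n) :
    ∃ c : K, c ≠ 0 ∧ (toEnd K L M e ^ j) ((toEnd K L M f ^ j) u) = c • u := by
  induction j with
  | zero => exact ⟨1, one_ne_zero, by simp⟩
  | succ j ih =>
    obtain ⟨c, hc, hcu⟩ := ih (by omega)
    have hjn : (n : K) - j ≠ 0 := sub_ne_zero.2 (Nat.cast_injective.ne (by omega))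
    refine ⟨(j + 1) * (n - j) * c, mul_ne_zero (mul_ne_zero j.cast_add_one_ne_zero hjn) hc, ?_⟩
    rw [pow_succ (toEnd K L M e), Module.End.mul_apply, toEnd_apply_apply,
      P.lie_e_pow_succ_toEnd_f, map_smul, hcu, smul_smul]

lemma exists_pow_toEnd_eq_of_lie_eq_zero (ht : IsSl2Triple h e f) {u : M} (hu : ⁅e, u⁆ = 0)
    {n j : ℕ} (hj : j ≤ n) (hn : ⁅h, u⁆ = (n : K) • u) :
    ∃ q : M, ⁅h, q⁆ = ((n - 2 * j : ℤ) : K) • q ∧ (toEnd K L M e ^ j) q = u := by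
  obtain rfl | hu0 := eq_or_ne u 0
  · exact ⟨0, by simp, map_zero _⟩
  obtain ⟨c, hc, hcu⟩ := exists_pow_toEnd_pow_toEnd_eq_smul (ht := ht) ⟨hu0, hn, hu⟩ hj
  refine ⟨c⁻¹ • (toEnd K L M f ^ j) u, ?_, by rw [map_smul, hcu, inv_smul_smul₀ hc]⟩
  have hf : ⁅h, f⁆ = (-2 : K) • f := by rw [ht.lie_lie_smul_f K, neg_smul]
  rw [lie_smul, lie_pow_toEnd_apply_eq_smul hf hn, smul_comm]
  congr 2
  push_cast
  ring

lemma ker_toEnd_inf_range_pow_le (ht : IsSl2Triple h e f) (he : IsNilpotent (toEnd K L M e))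
    (k : ℕ) : LinearMap.ker (toEnd K L M e) ⊓ LinearMap.range (toEnd K L M e ^ k) ≤
      ⨆ m : ℕ, LinearMap.ker (toEnd K L M e) ⊓ (toEnd K L M h).eigenspace ((k + m : ℕ) : K) :=
  ker_inf_range_pow_le_iSup_eigenspace (ht.lie_e_f ▸ toEnd_mul_sub_toEnd_mul e f)
    (toEnd_mul_sub_toEnd_mul_of_lie_eq_two_smul (ht.lie_h_e_smul K)) he k

lemma exists_nat_of_mem_ker_toEnd_inf_range_pow (ht : IsSl2Triple h e f)
    (he : IsNilpotent (toEnd K L M e)) {k : ℕ} {μ : K} {v : M}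
    (hv : v ∈ LinearMap.ker (toEnd K L M e) ⊓ LinearMap.range (toEnd K L M e ^ k))
    (hμ : ⁅h, v⁆ = μ • v) (hv0 : v ≠ 0) : ∃ m : ℕ, k ≤ m ∧ μ = m :=
  exists_nat_of_mem_ker_inf_range_pow (ht.lie_e_f ▸ toEnd_mul_sub_toEnd_mul e f)
    (toEnd_mul_sub_toEnd_mul_of_lie_eq_two_smul (ht.lie_h_e_smul K)) he hv hμ hv0

lemma iSup_eigenspace_toEnd_eq_top (ht : IsSl2Triple h e f) (he : IsNilpotent (toEnd K L M e)) :
    ⨆ i : ℤ, (toEnd K L M h).eigenspace (i : K) = ⊤ := by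
  set W := ⨆ i : ℤ, (toEnd K L M h).eigenspace (i : K)
  have hker (j : ℕ) : LinearMap.ker (toEnd K L M e ^ j) ≤ W := by
    induction j with
    | zero => intro v hv; simp_all
    | succ j ih =>
      intro v hv
      have hle : ⨆ m : ℕ, LinearMap.ker (toEnd K L M e) ⊓ (toEnd K L M h).eigenspace
          ((j + m : ℕ) : K) ≤ W.map (toEnd K L M e ^ j) := iSup_le fun m u hu ↦ by
        obtain ⟨q, hq, hqu⟩ := exists_pow_toEnd_eq_of_lie_eq_zero ht hu.1 (Nat.le_add_right j m)
          (mem_eigenspace_iff.1 hu.2)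
        exact ⟨q, Submodule.mem_iSup_of_mem _ (mem_eigenspace_iff.2 hq), hqu⟩
      obtain ⟨w, hw, hwv⟩ := hle (ker_toEnd_inf_range_pow_le ht he j
        ⟨by rwa [pow_succ'] at hv, v, rfl⟩)
      rw [← sub_add_cancel v w]
      exact add_mem (ih (by simp [hwv])) hw
  obtain ⟨n, hn⟩ := he
  exact top_le_iff.1 (by simpa [hn] using hker n)

end Sl2Modules

section MonodromyStep

/-- The step of weight at least `1` of the monodromy weight filtration of a nilpotent endomorphism
`X` of `V`. -/
def monodromyStep {K V : Type*} [Field K] [AddCommGroup V] [Module K V] (X : End K V) :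
    Submodule K V :=
  ⨆ k : ℕ, LinearMap.ker (X ^ k) ⊓ LinearMap.range (X ^ k)

variable {K L M : Type*} [Field K] [CharZero K] [LieRing L] [LieAlgebra K L] [AddCommGroup M]
  [Module K M] [LieRingModule L M] [LieModule K L M] {h e f : L}

lemma mem_weightFiltration_one_of_mem_ker_inf_range_pow [FiniteDimensional K M]
    (ht : IsSl2Triple h e f) (he : IsNilpotent (toEnd K L M e)) {k : ℕ} {v : M} {μ : K}
    (hv : v ∈ LinearMap.ker (toEnd K L M e ^ k) ⊓ LinearMap.range (toEnd K L M e ^ k))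
    (hμ : ⁅h, v⁆ = μ • v) : v ∈ weightFiltration (toEnd K L M h) 1 := by
  set X := toEnd K L M e
  obtain ⟨hXv, q, rfl⟩ := hv
  replace hXv : (X ^ k) ((X ^ k) q) = 0 := hXv
  obtain hv0 | hv0 := eq_or_ne ((X ^ k) q) 0
  · exact hv0 ▸ zero_mem _
  obtain ⟨j, hj, hj'⟩ := Nat.exists_not_and_succ_of_not_zero_of_exists
    (p := fun j ↦ (X ^ j) ((X ^ k) q) = 0) (by simpa using hv0) ⟨k, hXv⟩
  have hjk : j < k := by
    by_contra! hkj
    exact hj (by rw [← Nat.sub_add_cancel hkj, pow_add, Module.End.mul_apply, hXv, map_zero])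
  obtain ⟨m, hm, hμm⟩ := exists_nat_of_mem_ker_toEnd_inf_range_pow ht he (k := j + k)
    ⟨by rwa [pow_succ'] at hj', q, by rw [pow_add]; rfl⟩
    (lie_pow_toEnd_apply_eq_smul (ht.lie_h_e_smul K) hμ j) hj
  have hμ' : μ = ((m - 2 * j : ℤ) : K) := by
    rw [eq_sub_of_add_eq hμm]
    push_cast
    ring
  exact eigenspace_le_weightFiltration (by omega) (mem_eigenspace_iff.2 (hμ' ▸ hμ))

lemma monodromyStep_toEnd_le_weightFiltration [FiniteDimensional K M] (ht : IsSl2Triple h e f)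
    (he : IsNilpotent (toEnd K L M e)) :
    monodromyStep (toEnd K L M e) ≤ weightFiltration (toEnd K L M h) 1 := by
  set X := toEnd K L M e
  set H := toEnd K L M h
  refine iSup_le fun k ↦ ?_
  have hinv : ∀ v ∈ LinearMap.ker (X ^ k) ⊓ LinearMap.range (X ^ k),
      H v ∈ LinearMap.ker (X ^ k) ⊓ LinearMap.range (X ^ k) := by
    rintro _ ⟨hv, q, rfl⟩
    have hlie := lie_pow_toEnd_apply (M := M) (ht.lie_h_e_smul K) k
    refine ⟨?_, ⁅h, q⁆ + (k * 2 : K) • q, by rw [map_add, map_smul]; exact (hlie q).symm⟩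
    have hXv : (X ^ k) ((X ^ k) q) = 0 := hv
    have hXHv := hlie ((X ^ k) q)
    rw [hXv, lie_zero, smul_zero, add_zero] at hXHv
    exact hXHv.symm
  have hT : ⨆ μ : K, H.genEigenspace μ 1 = ⊤ := top_le_iff.1 <|
    (iSup_eigenspace_toEnd_eq_top ht he).ge.trans (iSup_le fun i ↦ le_iSup (H.genEigenspace · 1) _)
  rw [Submodule.eq_iSup_inf_genEigenspace 1 hinv hT]
  exact iSup_le fun μ v hv ↦
    mem_weightFiltration_one_of_mem_ker_inf_range_pow ht he hv.1 (mem_eigenspace_iff.1 hv.2)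

lemma mem_monodromyStep_of_lie_eq_smul (ht : IsSl2Triple h e f) (he : IsNilpotent (toEnd K L M e))
    {m : ℕ} {v : M} (hm : 1 ≤ m) (hv : ⁅h, v⁆ = (m : K) • v) :
    v ∈ monodromyStep (toEnd K L M e) := by
  set X := toEnd K L M e
  have hpow (j : ℕ) {v : M} (hv : ⁅h, v⁆ = (m : K) • v) (hj : (X ^ j) v = 0) :
      v ∈ monodromyStep X := by
    induction j generalizing v with
    | zero => simp_all
    | succ j ih =>
      have hu : ⁅h, (X ^ j) v⁆ = ((m + 2 * j : ℕ) : K) • (X ^ j) v := by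
        rw [lie_pow_toEnd_apply_eq_smul (ht.lie_h_e_smul K) hv]
        push_cast
        rw [mul_comm]
      obtain ⟨q, hq, hqv⟩ := exists_pow_toEnd_eq_of_lie_eq_zero ht
        (by rwa [pow_succ'] at hj) le_rfl hu
      set v' := (X ^ (m + j)) q
      have hv' : ⁅h, v'⁆ = (m : K) • v' := by
        rw [lie_pow_toEnd_apply_eq_smul (ht.lie_h_e_smul K) hq]
        congr 1
        push_cast
        ring
      have hXv' : (X ^ j) v' = (X ^ j) v := by
        rw [← hqv, ← Module.End.mul_apply, ← pow_add]
        congr 2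
        omega
      have hmem : v' ∈ LinearMap.ker (X ^ (m + j)) ⊓ LinearMap.range (X ^ (m + j)) := by
        refine ⟨?_, q, rfl⟩
        obtain ⟨i, rfl⟩ := Nat.exists_eq_add_of_le hm
        change (X ^ (1 + i + j)) v' = 0
        rw [show 1 + i + j = i + 1 + j by omega, pow_add, Module.End.mul_apply, hXv',
          ← Module.End.mul_apply, ← pow_add, add_assoc, pow_add, Module.End.mul_apply,
          add_comm 1 j, hj, map_zero]
      rw [← sub_add_cancel v v']
      exact add_mem (ih (by rw [lie_sub, hv, hv', smul_sub]) (by rw [map_sub, hXv', sub_self]))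
        (Submodule.mem_iSup_of_mem _ hmem)
  obtain ⟨n, hn⟩ := he
  exact hpow n hv (by rw [hn, LinearMap.zero_apply])

lemma monodromyStep_toEnd_eq_weightFiltration [FiniteDimensional K M] (ht : IsSl2Triple h e f)
    (he : IsNilpotent (toEnd K L M e)) :
    monodromyStep (toEnd K L M e) = weightFiltration (toEnd K L M h) 1 :=
  (monodromyStep_toEnd_le_weightFiltration ht he).antisymm <| iSup_le fun n v hv ↦
    mem_monodromyStep_of_lie_eq_smul ht he (m := 1 + n) (by omega)
      (by simpa using mem_eigenspace_iff.1 hv)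

end MonodromyStep

section MonodromyChains

variable {K V : Type*} [Field K] [AddCommGroup V] [Module K V] {X : End K V}

lemma ker_pow_inf_range_pow_eq_bot [FiniteDimensional K V] {k : ℕ} (hk : finrank K V ≤ k) :
    LinearMap.ker (X ^ k) ⊓ LinearMap.range (X ^ k) = ⊥ := by
  refine (Submodule.eq_bot_iff _).2 ?_
  rintro _ ⟨hq, q, rfl⟩
  have hq : q ∈ LinearMap.ker (X ^ (k + k)) := by rwa [pow_add]
  rwa [Module.End.ker_pow_eq_ker_pow_finrank_of_le (by omega),
    ← Module.End.ker_pow_eq_ker_pow_finrank_of_le hk] at hq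

/-- The family `u` solves the equations `X (u k i) = u k (i + 1) + r k i` with `u k (2 * k) = 0`.
For `r = 0` the vectors `u k k` of the solutions are the elements of `ker (X ^ k) ⊓ range (X ^ k)`;
unlike the equations defining this subspace, those for `u` are linear in `X`. -/
def IsChainFamily (X : End K V) (r u : Fin (finrank K V) → ℕ → V) : Prop :=
  (∀ k, ∀ i < 2 * finrank K V, X (u k i) = u k (i + 1) + r k i) ∧ ∀ k, u k (2 * k) = 0

lemma exists_isChainFamily_of_mem_monodromyStep [FiniteDimensional K V] {w : V}
    (hw : w ∈ monodromyStep X) : ∃ u, IsChainFamily X 0 u ∧ ∑ k, u k k = w := by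
  induction hw using Submodule.iSup_induction' with
  | zero => exact ⟨0, ⟨by simp, by simp⟩, by simp⟩
  | add v w _ _ hv hw =>
    obtain ⟨u, hu, rfl⟩ := hv
    obtain ⟨u', hu', rfl⟩ := hw
    exact ⟨u + u', ⟨fun k i hi ↦ by simp [hu.1 k i hi, hu'.1 k i hi],
      by simp [hu.2, hu'.2]⟩, by simp [Finset.sum_add_distrib]⟩
  | mem k v hv =>
    obtain hk | hk := le_or_gt (finrank K V) k
    · rw [ker_pow_inf_range_pow_eq_bot hk, Submodule.mem_bot] at hv
      exact ⟨0, ⟨by simp, by simp⟩, by simp [hv]⟩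
    · obtain ⟨hv, q, rfl⟩ := hv
      refine ⟨Pi.single ⟨k, hk⟩ fun i ↦ (X ^ i) q, ⟨fun j i _ ↦ ?_, fun j ↦ ?_⟩, ?_⟩
      · obtain rfl | hj := eq_or_ne j ⟨k, hk⟩
        · simp [pow_succ']
        · simp [hj]
      · obtain rfl | hj := eq_or_ne j ⟨k, hk⟩
        · rw [Pi.single_eq_same, two_mul, pow_add]
          exact hv
        · simp [hj]
      · rw [Finset.sum_eq_single ⟨k, hk⟩ (fun j _ hj ↦ by simp [hj]) (by simp)]
        simp

lemma IsChainFamily.sum_mem_monodromyStep {u : Fin (finrank K V) → ℕ → V}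
    (hu : IsChainFamily X 0 u) : ∑ k, u k k ∈ monodromyStep X := by
  have hpow (k) {i : ℕ} (hi : i ≤ 2 * finrank K V) : (X ^ i) (u k 0) = u k i := by
    induction i with
    | zero => rfl
    | succ i ih =>
      rw [pow_succ', Module.End.mul_apply, ih (by omega), hu.1 k i (by omega), Pi.zero_apply,
        Pi.zero_apply, add_zero]
  refine sum_mem fun k _ ↦ Submodule.mem_iSup_of_mem k.1 ⟨?_, u k 0, hpow k (by omega)⟩
  change (X ^ (k : ℕ)) (u k k) = 0
  rw [← hpow k (by omega), ← Module.End.mul_apply, ← pow_add, ← two_mul, hpow k (by omega),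
    hu.2]

end MonodromyChains

section GenericElements

variable {K L : Type*} [Field K] [LieRing L] [LieAlgebra K L]

lemma isChainFamily_lie_add {x a : L} {u b : Fin (finrank K L) → ℕ → L}
    (hu : IsChainFamily (ad K L x) 0 u)
    (hb : IsChainFamily (ad K L x) (fun k i ↦ ⁅⁅a, x⁆, u k i⁆) b) :
    IsChainFamily (ad K L x) 0 fun k i ↦ ⁅a, u k i⁆ + b k i := by
  refine ⟨fun k i hi ↦ ?_, fun k ↦ by simp [hu.2, hb.2]⟩
  have hux := hu.1 k i hi
  have hbx := hb.1 k i hi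
  rw [ad_apply] at hux hbx ⊢
  rw [lie_add, leibniz_lie x, hux, hbx, ← lie_skew x a, neg_lie]
  simp only [Pi.zero_apply, add_zero]
  abel

/-- The consequences, for an element `x` of a subspace `U` of a Lie algebra, of the fact that the
ranks of the linear systems given by `⁅x, ·⁆`, by the Killing form and by the membership in
`U ⊓ monodromyStep (ad K L x)` are as large as possible on `U`. They replace the openness of the
orbit of `x` in Richardson's theorem. -/
structure IsGeneric (U : Submodule K L) (x : L) : Prop where
  mem : x ∈ U
  exists_lie_eq {v c : L} : v ∈ U → ⁅x, c⁆ = 0 → killingForm K L x c = 0 →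
    ∃ b, ⁅x, b⁆ = ⁅v, c⁆ ∧ killingForm K L x b = killingForm K L v c
  lie_mem_sup {a w : L} : ⁅a, x⁆ ∈ U → w ∈ U ⊓ monodromyStep (ad K L x) →
    ⁅a, w⁆ ∈ U ⊔ monodromyStep (ad K L x)

lemma exists_isGeneric [Infinite K] [FiniteDimensional K L] (U : Submodule K L) :
    ∃ x, IsGeneric U x := by
  let n := finrank K L
  let A : (L × (Fin n → ℕ → L)) →ₗ[K]
      (L × K) × (Fin n → Fin (2 * n) → L) × (Fin n → L) × (L ⧸ U) :=
    { toFun p := (0, fun k i ↦ -p.2 k (i + 1), fun k ↦ p.2 k (2 * k), U.mkQ (∑ k, p.2 k k))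
      map_add' p q := by
        simp [Finset.sum_add_distrib, funext_iff, add_comm, -Submodule.mkQ_apply]
      map_smul' c p := by simp [Finset.smul_sum, funext_iff] }
  let B : L →ₗ[K] (L × (Fin n → ℕ → L)) →ₗ[K]
      (L × K) × (Fin n → Fin (2 * n) → L) × (Fin n → L) × (L ⧸ U) :=
    LinearMap.mk₂ K (fun x p ↦ ((⁅x, p.1⁆, killingForm K L x p.1), fun k i ↦ ⁅x, p.2 k i⁆, 0, 0))
      (by intros; ext <;> simp) (by intros; ext <;> simp) (by intros; ext <;> simp)
      (by intros; ext <;> simp)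
  have hsolve (x b s : L) (t : K) (r w : Fin n → ℕ → L) :
      (A + B x) (b, w) = ((s, t), fun k (i : Fin (2 * n)) ↦ r k i, 0, 0) ↔
        (⁅x, b⁆ = s ∧ killingForm K L x b = t) ∧ IsChainFamily (ad K L x) r w ∧
          ∑ k, w k k ∈ U := by
    have hmkQ : U.mkQ (∑ k, w k k) = 0 ↔ ∑ k, w k k ∈ U := Submodule.Quotient.mk_eq_zero U
    simp [A, B, funext_iff, Prod.ext_iff, IsChainFamily, Fin.forall_iff,
      and_assoc, neg_add_eq_iff_eq_add, n, -Submodule.mkQ_apply, -map_sum, hmkQ]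
  obtain ⟨x, hxU, hx⟩ := exists_forall_mem_range_of_apply_eq_zero A B U
  refine ⟨x, hxU, fun {v c} hv hc hκ ↦ ?_, fun {a w} ha hw ↦ ?_⟩
  · obtain ⟨⟨b, u⟩, hb⟩ := hx v hv (c, 0)
      ((hsolve x c 0 0 0 0).2 ⟨⟨hc, hκ⟩, ⟨by simp, by simp⟩, by simp⟩)
    exact ⟨b, ((hsolve x b _ _ (fun _ _ ↦ ⁅v, 0⁆) u).1 hb).1⟩
  · obtain ⟨u, hu, rfl⟩ := exists_isChainFamily_of_mem_monodromyStep hw.2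
    obtain ⟨⟨c, b⟩, hb⟩ := hx ⁅a, x⁆ ha (0, u)
      ((hsolve x 0 0 0 0 u).2 ⟨⟨by simp, by simp⟩, hu, hw.1⟩)
    obtain ⟨-, hb, hbU⟩ := (hsolve x c _ _ (fun k i ↦ ⁅⁅a, x⁆, u k i⁆) b).1 hb
    have hmem := (isChainFamily_lie_add hu hb).sum_mem_monodromyStep
    rw [Finset.sum_add_distrib, ← lie_sum] at hmem
    rw [← neg_add_cancel_left (∑ k, b k k) ⁅a, _⁆, add_comm _ ⁅a, _⁆]
    exact Submodule.add_mem_sup (neg_mem hbU) hmem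

end GenericElements

section Richardson

variable {K L : Type*} [Field K] [CharZero K] [LieRing L] [LieAlgebra K L] [FiniteDimensional K L]
  {g d x y σ : L}

lemma exists_lie_eq_of_sub_mem_weightFiltration {U : Submodule K L}
    (hd : ⨆ i : ℤ, (ad K L d).eigenspace (i : K) = ⊤)
    (hσU : ∀ v ∈ U, ⁅σ, v⁆ ∈ U) (hσd : σ - d ∈ weightFiltration (ad K L d) 1) {w : L}
    (hw : w ∈ U ⊓ weightFiltration (ad K L d) 1) :
    ∃ v ∈ U ⊓ weightFiltration (ad K L d) 1, ⁅σ, v⁆ = w := by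
  have hσ : ∀ v ∈ U ⊓ weightFiltration (ad K L d) 1,
      ad K L σ v ∈ U ⊓ weightFiltration (ad K L d) 1 := fun v hv ↦ by
    refine ⟨hσU v hv.1, ?_⟩
    rw [ad_apply, ← sub_add_cancel σ d, add_lie]
    exact add_mem (weightFiltration_antitone (by norm_num) (lie_mem_weightFiltration hσd hv.2))
      (apply_mem_weightFiltration hv.2)
  have hinj : Function.Injective ((ad K L σ).restrict hσ) :=
    (injective_iff_map_eq_zero _).2 fun v hv ↦ Subtype.ext <|
      eq_zero_of_lie_eq_zero_of_sub_mem_weightFiltration hd hσd v.2.2 (congr_arg Subtype.val hv)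
  obtain ⟨v, hv⟩ := LinearMap.injective_iff_surjective.1 hinj ⟨w, hw⟩
  exact ⟨v, v.2, congr_arg Subtype.val hv⟩

variable [IsKilling K L] (hg : ⨆ i : ℤ, (ad K L g).eigenspace (i : K) = ⊤)
include hg

lemma mem_weightFiltration_sup_of_killingForm_eq_zero
    (hd : ⨆ i : ℤ, (ad K L d).eigenspace (i : K) = ⊤) {i j : ℤ} {v : L}
    (hv : ∀ w ∈ weightFiltration (ad K L g) (1 - i) ⊓ weightFiltration (ad K L d) (1 - j),
      killingForm K L v w = 0) :
    v ∈ weightFiltration (ad K L g) i ⊔ weightFiltration (ad K L d) j := by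
  refine mem_of_killingForm_eq_zero _ fun w hw ↦ hv w ⟨?_, ?_⟩
  · refine mem_weightFiltration_of_killingForm_eq_zero hg fun a ha ↦ ?_
    rw [killingForm_comm]
    exact hw a (Submodule.mem_sup_left (by simpa using ha))
  · refine mem_weightFiltration_of_killingForm_eq_zero hd fun a ha ↦ ?_
    rw [killingForm_comm]
    exact hw a (Submodule.mem_sup_right (by simpa using ha))

lemma exists_mem_weightFiltration_zero_sub_mem_weightFiltration_one
    (hd : ⨆ i : ℤ, (ad K L d).eigenspace (i : K) = ⊤) :
    ∃ σ ∈ weightFiltration (ad K L g) 0, σ - d ∈ weightFiltration (ad K L d) 1 := by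
  have hsup : d ∈ weightFiltration (ad K L g) 0 ⊔ weightFiltration (ad K L d) 1 :=
    mem_weightFiltration_sup_of_killingForm_eq_zero hg hd fun w hw ↦
      killingForm_eq_zero_of_mem_weightFiltration_zero hd (by simpa using hw.2)
        (isNilpotent_ad_of_mem_weightFiltration_one hg (by simpa using hw.1))
  obtain ⟨σ, hσ, q, hq, hσq⟩ := Submodule.mem_sup.1 hsup
  have hsub : σ - d = -q := by rw [← hσq, sub_add_cancel_left]
  exact ⟨σ, hσ, hsub ▸ neg_mem hq⟩

lemma lie_mem_map_of_forall_killingForm_eq_zero {w : L}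
    (hw : ∀ a, ⁅a, x⁆ ∈ weightFiltration (ad K L g) 1 → killingForm K L a w = 0) :
    w ∈ (weightFiltration (ad K L g) 0).map (ad K L x) := by
  refine mem_of_killingForm_eq_zero _ fun b hb ↦ ?_
  rw [killingForm_comm]
  refine hw b (mem_weightFiltration_of_killingForm_eq_zero hg fun c hc ↦ ?_)
  rw [killingForm_lie_apply, killingForm_comm]
  exact hb _ ⟨c, hc, rfl⟩

namespace IsGeneric

variable (hx : IsGeneric (weightFiltration (ad K L g) 1) x) (ht : IsSl2Triple d x y)
include hx ht

lemma mem_weightFiltration_zero_of_lie_eq_zero {c : L} (hc : ⁅x, c⁆ = 0) :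
    c ∈ weightFiltration (ad K L g) 0 := by
  have hnil := isNilpotent_ad_of_mem_weightFiltration_one hg hx.mem
  refine mem_weightFiltration_of_killingForm_eq_zero hg fun v hv ↦ ?_
  replace hc := ker_toEnd_inf_range_pow_le ht hnil 0 ⟨hc, c, rfl⟩
  induction hc using Submodule.iSup_induction' with
  | zero => simp
  | add c c' _ _ hc hc' => rw [map_add, LinearMap.add_apply, hc, hc', add_zero]
  | mem m c hc =>
    obtain ⟨hxc, hdc⟩ := hc
    replace hxc : ⁅x, c⁆ = 0 := hxc
    replace hdc : ⁅d, c⁆ = ((0 + m : ℕ) : K) • c := mem_eigenspace_iff.1 hdc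
    obtain ⟨b, hb, hκ⟩ :=
      hx.exists_lie_eq (by simpa using hv) hxc (killingForm_eq_zero_of_lie_eq_zero hxc hnil)
    have hm : (2 + m : K) * killingForm K L v c = 0 := by
      calc (2 + m : K) * killingForm K L v c
          = killingForm K L ⁅d, x⁆ b + killingForm K L v ⁅d, c⁆ := by
            rw [ht.lie_h_e_smul K, hdc, map_smul, map_smul, LinearMap.smul_apply, hκ]
            simp [add_mul]
        _ = 0 := by
          rw [killingForm_lie_apply, hb, killingForm_comm v, killingForm_lie_apply, ← map_add,
            ← lie_skew, neg_add_cancel, map_zero]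
    rw [killingForm_comm]
    exact (mul_eq_zero.1 hm).resolve_left (by exact_mod_cast (by omega : 2 + m ≠ 0))

lemma killingForm_eq_zero_of_lie_mem {a w : L} (ha : ⁅a, x⁆ ∈ weightFiltration (ad K L g) 1)
    (hw : w ∈ weightFiltration (ad K L g) 1 ⊓ weightFiltration (ad K L d) 1) :
    killingForm K L a w = 0 := by
  have hnil := isNilpotent_ad_of_mem_weightFiltration_one hg hx.mem
  have hd := iSup_eigenspace_toEnd_eq_top ht hnil
  obtain ⟨σ, hσ, hσd⟩ := exists_mem_weightFiltration_zero_sub_mem_weightFiltration_one hg hd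
  have hd0 : d ∈ weightFiltration (ad K L d) 0 :=
    eigenspace_le_weightFiltration le_rfl (mem_eigenspace_iff.2 (by simp))
  have hσ0 : σ ∈ weightFiltration (ad K L d) 0 :=
    by
    simpa using add_mem (weightFiltration_antitone zero_le_one hσd) hd0
  obtain ⟨v, hv, rfl⟩ := exists_lie_eq_of_sub_mem_weightFiltration hd
    (fun v hv ↦ by simpa using lie_mem_weightFiltration hσ hv) hσd hw
  have hstep : monodromyStep (ad K L x) = weightFiltration (ad K L d) 1 :=
    monodromyStep_toEnd_eq_weightFiltration ht hnil
  have hav := hx.lie_mem_sup ha (hstep.symm ▸ hv)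
  rw [hstep] at hav
  obtain ⟨p, hp, q, hq, hpq⟩ := Submodule.mem_sup.1 hav
  rw [← lie_skew, map_neg, ← killingForm_lie_apply, ← hpq, map_add, LinearMap.add_apply,
    killingForm_eq_zero_of_mem_weightFiltration (by norm_num) hp hσ,
    killingForm_eq_zero_of_mem_weightFiltration (by norm_num) hq hσ0, add_zero, neg_zero]

lemma mem_weightFiltration_zero_of_lie_mem {a : L} (ha : ⁅a, x⁆ ∈ weightFiltration (ad K L g) 1) :
    a ∈ weightFiltration (ad K L g) 0 := by
  have hd := iSup_eigenspace_toEnd_eq_top ht (isNilpotent_ad_of_mem_weightFiltration_one hg hx.mem)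
  have hsup : a ∈ weightFiltration (ad K L g) 0 ⊔ weightFiltration (ad K L d) 0 :=
    mem_weightFiltration_sup_of_killingForm_eq_zero hg hd fun w hw ↦
      hx.killingForm_eq_zero_of_lie_mem hg ht ha (by simpa using hw)
  obtain ⟨p, hp, q, hq, rfl⟩ := Submodule.mem_sup.1 hsup
  have hpx : ⁅p, x⁆ ∈ weightFiltration (ad K L g) 1 := by
    simpa using lie_mem_weightFiltration hp hx.mem
  have hqx : ⁅q, x⁆ ∈ weightFiltration (ad K L g) 1 ⊓ weightFiltration (ad K L d) 1 := by
    refine ⟨by simpa using sub_mem ha hpx, weightFiltration_antitone one_le_two ?_⟩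
    have hx2 : x ∈ (ad K L d).eigenspace ((2 : ℤ) : K) :=
      mem_eigenspace_iff.2 (by simpa using ht.lie_h_e_smul K)
    simpa using lie_mem_weightFiltration hq (eigenspace_le_weightFiltration le_rfl hx2)
  obtain ⟨b, hb, hbx⟩ := lie_mem_map_of_forall_killingForm_eq_zero hg fun c hc ↦
    hx.killingForm_eq_zero_of_lie_mem hg ht hc hqx
  have hqb : q + b ∈ weightFiltration (ad K L g) 0 :=
    hx.mem_weightFiltration_zero_of_lie_eq_zero hg ht (by
      rw [lie_add, ← ad_apply K L x b, hbx, ← lie_skew, neg_add_cancel])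
  exact add_mem hp ((add_mem_cancel_right hb).1 hqb)

end IsGeneric

/-- Richardson's dense orbit theorem for the parabolic subalgebra of nonnegative weights. -/
theorem exists_weightFiltration_one_le_map_ad [IsAlgClosed K] :
    ∃ x ∈ weightFiltration (ad K L g) 1,
      weightFiltration (ad K L g) 1 ≤ (weightFiltration (ad K L g) 0).map (ad K L x) := by
  obtain ⟨x, hx⟩ := exists_isGeneric (weightFiltration (ad K L g) 1)
  refine ⟨x, hx.mem, fun v hv ↦ lie_mem_map_of_forall_killingForm_eq_zero hg fun a ha ↦ ?_⟩
  suffices a ∈ weightFiltration (ad K L g) 0 from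
    killingForm_eq_zero_of_mem_weightFiltration (by norm_num) this hv
  obtain rfl | hx0 := eq_or_ne x 0
  · refine mem_weightFiltration_of_killingForm_eq_zero hg fun v hv ↦ ?_
    obtain ⟨b, -, hb⟩ := hx.exists_lie_eq (by simpa using hv) (zero_lie a) (by simp)
    rw [killingForm_comm, ← hb, map_zero, LinearMap.zero_apply]
  · have hnil := isNilpotent_ad_of_mem_weightFiltration_one hg hx.mem
    obtain ⟨d, y, ht⟩ := exists_isSl2Triple hnil hx0
    exact hx.mem_weightFiltration_zero_of_lie_mem hg ht ha

end Richardson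

section EvenWeights

lemma finrank_inf_comap_add_finrank_map_sup {K V W : Type*} [Field K] [AddCommGroup V] [Module K V]
    [FiniteDimensional K V] [AddCommGroup W] [Module K W] [FiniteDimensional K W] (f : V →ₗ[K] W)
    (A : Submodule K V) (B : Submodule K W) :
    finrank K (A ⊓ B.comap f : Submodule K V) + finrank K (A.map f ⊔ B : Submodule K W) =
      finrank K A + finrank K B := by
  have hA := LinearMap.finrank_range_add_finrank_ker (f.domRestrict A)
  have hAB := LinearMap.finrank_range_add_finrank_ker (f.domRestrict (A ⊓ B.comap f))
  have hker : A ⊓ B.comap f ⊓ LinearMap.ker f = A ⊓ LinearMap.ker f := by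
    rw [inf_assoc, inf_eq_right.2 (LinearMap.ker_le_comap f)]
  have hmap : (A ⊓ B.comap f).map f = A.map f ⊓ B := by
    simpa using SetLike.coe_injective (Set.image_inter_preimage f A B)
  rw [LinearMap.range_domRestrict, LinearMap.ker_domRestrict, ← Submodule.finrank_map_subtype_eq,
    Submodule.map_comap_subtype] at hA hAB
  rw [hker, hmap] at hAB
  have hsup := Submodule.finrank_sup_add_finrank_inf_eq (A.map f) B
  omega

variable {K L : Type*} [Field K] [CharZero K] [LieRing L] [LieAlgebra K L] [FiniteDimensional K L]
  {d e : L}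

lemma finrank_weightFiltration_add_le (he : ⁅d, e⁆ = (2 : K) • e)
    (h0 : ∀ z : L, ⁅d, z⁆ = 0 → ⁅e, z⁆ = 0 → z = 0) :
    finrank K (weightFiltration (ad K L d) 0) + finrank K (weightFiltration (ad K L d) 3) ≤
      finrank K (weightFiltration (ad K L d) 1) + finrank K (weightFiltration (ad K L d) 2) := by
  have he2 : e ∈ (ad K L d).eigenspace ((2 : ℤ) : K) := mem_eigenspace_iff.2 (by simpa using he)
  have hlie {i j : ℤ} (hij : i + 2 = j) {v : L} (hv : v ∈ weightFiltration (ad K L d) i) :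
      ⁅e, v⁆ ∈ weightFiltration (ad K L d) j := by
    rw [← hij, add_comm]
    exact lie_mem_weightFiltration (eigenspace_le_weightFiltration le_rfl he2) hv
  have hker : weightFiltration (ad K L d) 0 ⊓ (weightFiltration (ad K L d) 3).comap (ad K L e) ≤
      weightFiltration (ad K L d) 1 := by
    rintro v ⟨hv, hev⟩
    replace hev : ⁅e, v⁆ ∈ weightFiltration (ad K L d) 3 := hev
    rw [SetLike.mem_coe, ← eigenspace_sup_weightFiltration] at hv
    obtain ⟨v₀, hv₀, v₁, hv₁, rfl⟩ := Submodule.mem_sup.1 hv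
    rw [lie_add, add_mem_cancel_right (hlie (by norm_num) hv₁)] at hev
    have hev₀ : ⁅e, v₀⁆ ∈ (ad K L d).eigenspace ((2 : ℤ) : K) := by
      simpa using lie_mem_eigenspace_ad he2 hv₀
    have hev₀' := Submodule.disjoint_def.1
      (disjoint_eigenspace_weightFiltration (by norm_num)) _ hev₀ hev
    rwa [h0 v₀ (by simpa using mem_eigenspace_iff.1 hv₀) hev₀', zero_add]
  have hmap : (weightFiltration (ad K L d) 0).map (ad K L e) ⊔ weightFiltration (ad K L d) 3 ≤
      weightFiltration (ad K L d) 2 :=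
    sup_le (Submodule.map_le_iff_le_comap.2 fun v hv ↦ hlie (by norm_num) hv)
      (weightFiltration_antitone (by norm_num))
  rw [← finrank_inf_comap_add_finrank_map_sup (ad K L e)]
  exact add_le_add (Submodule.finrank_mono hker) (Submodule.finrank_mono hmap)

/-- Compare the ranks of `ad e` and `ad x`, both as maps from the weights `≥ 0` modulo the
weights `≥ 3`: the weights `≥ 2` must be the whole kernel of the latter. -/
lemma mem_weightFiltration_two_of_le_map_ad (he : ⁅d, e⁆ = (2 : K) • e)
    (h0 : ∀ z : L, ⁅d, z⁆ = 0 → ⁅e, z⁆ = 0 → z = 0) {x : L}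
    (hx : x ∈ weightFiltration (ad K L d) 1)
    (hle : weightFiltration (ad K L d) 1 ≤ (weightFiltration (ad K L d) 0).map (ad K L x)) :
    x ∈ weightFiltration (ad K L d) 2 := by
  have hker : weightFiltration (ad K L d) 2 ≤
      weightFiltration (ad K L d) 0 ⊓ (weightFiltration (ad K L d) 3).comap (ad K L x) := by
    refine fun v hv ↦ ⟨weightFiltration_antitone zero_le_two hv, ?_⟩
    simpa using lie_mem_weightFiltration hx hv
  have heq := Submodule.eq_of_le_of_finrank_le hker (by
    have hranks := finrank_inf_comap_add_finrank_map_sup (ad K L x)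
      (weightFiltration (ad K L d) 0) (weightFiltration (ad K L d) 3)
    have hmap := Submodule.finrank_mono
      (hle.trans (le_sup_left (b := weightFiltration (ad K L d) 3)))
    have hranks_e := finrank_weightFiltration_add_le he h0
    omega)
  rw [heq]
  exact ⟨weightFiltration_antitone zero_le_one hx, by simp⟩

lemma eq_zero_of_lie_eq_self [IsAlgClosed K] [IsKilling K L]
    (hd : ⨆ i : ℤ, (ad K L d).eigenspace (i : K) = ⊤) (he : ⁅d, e⁆ = (2 : K) • e)
    (h0 : ∀ z : L, ⁅d, z⁆ = 0 → ⁅e, z⁆ = 0 → z = 0) {z : L} (hz : ⁅d, z⁆ = z) : z = 0 := by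
  obtain ⟨x, hx, hle⟩ := exists_weightFiltration_one_le_map_ad hd
  have hx2 := mem_weightFiltration_two_of_le_map_ad he h0 hx hle
  have hz1 : z ∈ (ad K L d).eigenspace ((1 : ℤ) : K) := mem_eigenspace_iff.2 (by simpa using hz)
  obtain ⟨a, ha, hxa⟩ := hle (eigenspace_le_weightFiltration le_rfl hz1)
  have hz2 : z ∈ weightFiltration (ad K L d) 2 := by
    simpa [← hxa] using lie_mem_weightFiltration hx2 ha
  exact Submodule.disjoint_def.1 (disjoint_eigenspace_weightFiltration one_lt_two) z hz1 hz2

end EvenWeights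

section Distinguished

variable {K L : Type*} [Field K] [LieRing L] [LieAlgebra K L] [FiniteDimensional K L]
  [IsKilling K L] {d e f : L}

lemma mem_range_ad_of_killingForm_eq_zero {z : L}
    (hz : ∀ c : L, ⁅e, c⁆ = 0 → killingForm K L z c = 0) : z ∈ LinearMap.range (ad K L e) := by
  refine mem_of_killingForm_eq_zero _ fun c hc ↦ hz c ?_
  refine eq_zero_of_killingForm_eq_zero (K := K) fun y ↦ ?_
  rw [killingForm_comm, ← killingForm_lie_apply, ← lie_skew, map_neg, LinearMap.neg_apply]
  simpa using hc _ ⟨y, rfl⟩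

variable [CharZero K] [IsAlgClosed K]

lemma exists_isSemisimple_ad_isNilpotent_sub (z : L) : ∃ s : L, (ad K L s).IsSemisimple ∧
    IsNilpotent (ad K L z - ad K L s) ∧ ∀ c : L, ⁅z, c⁆ = 0 → ⁅s, c⁆ = 0 := by
  obtain ⟨N, -, S, hS_adjoin, hN, hS, hSN⟩ := (ad K L z).exists_isNilpotent_isSemisimple
  have hcomm : Commute (ad K L z) S := Algebra.commute_of_mem_adjoin_self hS_adjoin
  have hsub : ad K L z - S = N := by rw [hSN, add_sub_cancel_right]
  have hS_apply {μ : K} {v : L} (hv : v ∈ (ad K L z).maxGenEigenspace μ) : S v = μ • v :=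
    apply_eq_of_mem_of_comm_of_isFinitelySemisimple_of_isNil (maxGenEigenspace_eq (ad K L z) μ ▸ hv)
      hcomm hS.isFinitelySemisimple (hsub ▸ hN)
  have hS_lie (x y : L) : S ⁅x, y⁆ = ⁅S x, y⁆ + ⁅x, S y⁆ := by
    have htop := iSup_maxGenEigenspace_eq_top (ad K L z)
    induction htop ▸ Submodule.mem_top (x := x) using Submodule.iSup_induction' with
    | zero => simp
    | add _ _ _ _ h h' => simp only [add_lie, map_add, h, h']; abel
    | mem μ x hx =>
      induction htop ▸ Submodule.mem_top (x := y) using Submodule.iSup_induction' with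
      | zero => simp
      | add _ _ _ _ h h' => simp only [lie_add, map_add, h, h']; abel
      | mem ν y hy =>
        rw [hS_apply (lie_mem_maxGenEigenspace_toEnd hx hy), hS_apply hx, hS_apply hy, smul_lie,
          lie_smul, ← add_smul]
  let D : LieDerivation K L L := ⟨S, fun x y ↦ by rw [hS_lie, ← lie_skew (S x) y]; abel⟩
  obtain ⟨s, hs⟩ := LieDerivation.IsKilling.exists_eq_ad D
  have hsS : ad K L s = S := by rw [← LieDerivation.coe_ad_apply_eq_ad_apply s, hs]
  refine ⟨s, hsS ▸ hS, hsS ▸ hsub ▸ hN, fun c hc ↦ ?_⟩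
  rw [← ad_apply K, hsS, hS_apply (μ := 0), zero_smul]
  exact (mem_maxGenEigenspace _ _ _).2 ⟨1, by simpa using hc⟩

lemma isNilpotent_ad_of_lie_eq_zero
    (he : ∀ s : L, ⁅s, e⁆ = 0 → (ad K L s).IsSemisimple → s = 0) {z : L} (hz : ⁅z, e⁆ = 0) :
    IsNilpotent (ad K L z) := by
  obtain ⟨s, hs, hnil, hcomm⟩ := exists_isSemisimple_ad_isNilpotent_sub (K := K) z
  simpa [he s (hcomm e hz) hs] using hnil

lemma eq_zero_of_lie_eq_zero_of_isSl2Triple (ht : IsSl2Triple d e f)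
    (hnil : IsNilpotent (ad K L e))
    (he : ∀ s : L, ⁅s, e⁆ = 0 → (ad K L s).IsSemisimple → s = 0) {z : L} (hdz : ⁅d, z⁆ = 0)
    (hez : ⁅e, z⁆ = 0) : z = 0 := by
  have hself {c : L} (hc : ⁅e, c⁆ = 0) : killingForm K L c c = 0 :=
    killingForm_eq_zero_of_lie_eq_zero (lie_self c)
      (isNilpotent_ad_of_lie_eq_zero he (by rw [← lie_skew, hc, neg_zero]))
  have horth {c : L} (hc : ⁅e, c⁆ = 0) : killingForm K L z c = 0 := by
    have hsum := hself (c := z + c) (by rw [lie_add, hez, hc, add_zero])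
    simp only [map_add, LinearMap.add_apply, hself hez, hself hc, killingForm_comm c z] at hsum
    simpa [← two_mul] using hsum
  have hz : z ∈ LinearMap.ker (ad K L e) ⊓ LinearMap.range (ad K L e ^ 1) :=
    ⟨hez, by simpa only [pow_one, SetLike.mem_coe] using
      mem_range_ad_of_killingForm_eq_zero fun c ↦ horth⟩
  by_contra hz0
  obtain ⟨m, hm, hm0⟩ := exists_nat_of_mem_ker_toEnd_inf_range_pow ht hnil hz (μ := 0)
    (by simpa using hdz) hz0
  exact Nat.one_le_iff_ne_zero.1 hm (Nat.cast_eq_zero.1 hm0.symm)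

lemma exists_even_two_le_of_isSl2Triple (ht : IsSl2Triple d e f) (hnil : IsNilpotent (ad K L e))
    (he : ∀ s : L, ⁅s, e⁆ = 0 → (ad K L s).IsSemisimple → s = 0) {m : K} {z : L} (hz : z ≠ 0)
    (hze : ⁅z, e⁆ = 0) (hm : ⁅d, z⁆ = m • z) : ∃ n : ℕ, Even n ∧ 2 ≤ n ∧ m = n := by
  have hd := iSup_eigenspace_toEnd_eq_top ht hnil
  have h0 (z : L) (hdz : ⁅d, z⁆ = 0) (hez : ⁅e, z⁆ = 0) : z = 0 :=
    eq_zero_of_lie_eq_zero_of_isSl2Triple ht hnil he hdz hez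
  have hez : ⁅e, z⁆ = 0 := by rw [← lie_skew, hze, neg_zero]
  have P : ht.HasPrimitiveVectorWith z m := ⟨hz, hm, hez⟩
  obtain ⟨n, rfl⟩ := P.exists_nat
  have heven : Even n := by
    by_contra hodd
    obtain ⟨k, rfl⟩ := Nat.not_even_iff_odd.1 hodd
    refine P.pow_toEnd_f_ne_zero_of_eq_nat rfl (i := k) (by omega)
      (eq_zero_of_lie_eq_self hd (ht.lie_h_e_smul K) h0 ?_)
    rw [P.lie_h_pow_toEnd_f k]
    push_cast
    rw [add_sub_cancel_left, one_smul]
  have hn0 : n ≠ 0 := by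
    rintro rfl
    exact hz (h0 z (by simpa using hm) hez)
  exact ⟨n, heven, by grind, rfl⟩

theorem eigenvalues_even_and_two_le_general (ht : IsSl2Triple d e f)
    (hnil : IsNilpotent (ad K L e))
    (he : ∀ s : L, ⁅s, e⁆ = 0 → (ad K L s).IsSemisimple → s = 0) :
    (∀ m : K, (∃ z : L, z ≠ 0 ∧ ⁅z, e⁆ = 0 ∧ ⁅d, z⁆ = m • z) →
      ∃ n : ℕ, Even n ∧ 2 ≤ n ∧ m = n) ∧
    e ≠ 0 ∧ ⁅d, e⁆ = (2 : K) • e :=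
  ⟨fun _ ⟨_, hz, hze, hm⟩ ↦ exists_even_two_le_of_isSl2Triple ht hnil he hz hze hm,
    ht.e_ne_zero, ht.lie_h_e_smul K⟩

end Distinguished

/-- For a distinguished nilpotent `e`, every eigenvalue of `ad h` on `𝔤^e`
is a nonnegative even integer, `2` is an eigenvalue with eigenvector `e`, and `2` is the
smallest eigenvalue of `ad h` on `𝔤^e`. -/
theorem eigenvalues_even_and_two_le
    (L : Type*) [LieRing L] [LieAlgebra ℂ L] [FiniteDimensional ℂ L]
    [LieAlgebra.IsSemisimple ℂ L] (e h f : L)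
    (ht : IsSl2Triple h e f) (he : IsNilpotent (LieAlgebra.ad ℂ L e))
    (hdist : IsDistinguished L e) :
    (∀ m : ℂ, (∃ z : L, z ≠ 0 ∧ ⁅z, e⁆ = 0 ∧ ⁅h, z⁆ = m • z) →
      ∃ k : ℕ, Even k ∧ m = (k : ℂ)) ∧
    (e ≠ 0 ∧ ⁅h, e⁆ = (2 : ℂ) • e) ∧
    (∀ m : ℂ, (∃ z : L, z ≠ 0 ∧ ⁅z, e⁆ = 0 ∧ ⁅h, z⁆ = m • z) → (2 : ℂ) ≤ m) := by
  obtain ⟨heven, htwo⟩ := eigenvalues_even_and_two_le_general ht he hdist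
  exact ⟨fun m hm ↦ (heven m hm).imp fun n hn ↦ ⟨hn.1, hn.2.2⟩, htwo,
    fun m hm ↦ by obtain ⟨n, -, hn, rfl⟩ := heven m hm; exact_mod_cast hn⟩
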